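/- There exists a constant C > 0, independent of h, the center of K, u and w, such that for every h > 0, every cube K of half side h, every function u of class C⁴ on a neighborhood of K, and every w in the shape space P(K) = P₂(K) + span{x₁³, x₂³, x₃³, x₁x₂x₃}, the contribution of the second normal derivatives on the pair of opposite faces normal to the x₂-axis satisfies |∫_{F₂⁺} (∂²u/∂x₂²) · R⁰_{F₂⁺}(∂w/∂x₂) dx₁dx₃ − ∫_{F₂⁻} (∂²u/∂x₂²) · R⁰_{F₂⁻}(∂w/∂x₂) dx₁dx₃| ≤ C h² |u|_{H⁴(K)} |w|_{H²(K)}. -/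

import Mathlib

open MeasureTheory

/-- Partial derivative in the first variable of a curried function on `ℝ³`. -/
noncomputable def qd1 (f : ℝ → ℝ → ℝ → ℝ) : ℝ → ℝ → ℝ → ℝ :=
  fun x y z => deriv (fun t => f t y z) x

/-- Partial derivative in the second variable of a curried function on `ℝ³`. -/
noncomputable def qd2 (f : ℝ → ℝ → ℝ → ℝ) : ℝ → ℝ → ℝ → ℝ :=
  fun x y z => deriv (fun t => f x t z) y

/-- Partial derivative in the third variable of a curried function on `ℝ³`. -/
noncomputable def qd3 (f : ℝ → ℝ → ℝ → ℝ) : ℝ → ℝ → ℝ → ℝ :=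
  fun x y z => deriv (fun t => f x y t) z

/-- Membership in the shape space `P(K) = P₂(K) + span{x₁³, x₂³, x₃³, x₁x₂x₃}` of the
three-dimensional cubic Morley element. -/
def MorleyShape3 (w : ℝ → ℝ → ℝ → ℝ) : Prop :=
  ∃ c0 c1 c2 c3 c4 c5 c6 c7 c8 c9 c10 c11 c12 c13 : ℝ, ∀ x y z : ℝ,
    w x y z = c0 + c1 * x + c2 * y + c3 * z + c4 * x ^ 2 + c5 * y ^ 2 + c6 * z ^ 2
      + c7 * (x * y) + c8 * (x * z) + c9 * (y * z)
      + c10 * x ^ 3 + c11 * y ^ 3 + c12 * z ^ 3 + c13 * (x * y * z)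

/-- The `H²` seminorm of `v` on the box `[a1,b1] × [a2,b2] × [a3,b3]`, each ordering of
mixed partial derivatives counted. -/
noncomputable def semiH2Box (v : ℝ → ℝ → ℝ → ℝ) (a1 b1 a2 b2 a3 b3 : ℝ) : ℝ :=
  Real.sqrt (∫ x in a1..b1, ∫ y in a2..b2, ∫ z in a3..b3,
    (qd1 (qd1 v) x y z) ^ 2 + (qd2 (qd2 v) x y z) ^ 2 + (qd3 (qd3 v) x y z) ^ 2
      + 2 * (qd1 (qd2 v) x y z) ^ 2 + 2 * (qd1 (qd3 v) x y z) ^ 2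
      + 2 * (qd2 (qd3 v) x y z) ^ 2)

/-- The `H⁴` seminorm of `u` on the box `[a1,b1] × [a2,b2] × [a3,b3]`, each ordering of
mixed partial derivatives counted (hence the multinomial coefficients). -/
noncomputable def semiH4Box (u : ℝ → ℝ → ℝ → ℝ) (a1 b1 a2 b2 a3 b3 : ℝ) : ℝ :=
  Real.sqrt (∫ x in a1..b1, ∫ y in a2..b2, ∫ z in a3..b3,
    (qd1 (qd1 (qd1 (qd1 u))) x y z) ^ 2 + (qd2 (qd2 (qd2 (qd2 u))) x y z) ^ 2
      + (qd3 (qd3 (qd3 (qd3 u))) x y z) ^ 2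
      + 4 * (qd1 (qd1 (qd1 (qd2 u))) x y z) ^ 2
      + 4 * (qd1 (qd1 (qd1 (qd3 u))) x y z) ^ 2
      + 4 * (qd1 (qd2 (qd2 (qd2 u))) x y z) ^ 2
      + 4 * (qd2 (qd2 (qd2 (qd3 u))) x y z) ^ 2
      + 4 * (qd1 (qd3 (qd3 (qd3 u))) x y z) ^ 2
      + 4 * (qd2 (qd3 (qd3 (qd3 u))) x y z) ^ 2
      + 6 * (qd1 (qd1 (qd2 (qd2 u))) x y z) ^ 2
      + 6 * (qd1 (qd1 (qd3 (qd3 u))) x y z) ^ 2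
      + 6 * (qd2 (qd2 (qd3 (qd3 u))) x y z) ^ 2
      + 12 * (qd1 (qd1 (qd2 (qd3 u))) x y z) ^ 2
      + 12 * (qd1 (qd2 (qd2 (qd3 u))) x y z) ^ 2
      + 12 * (qd1 (qd2 (qd3 (qd3 u))) x y z) ^ 2)

/-- `u` is of class `C⁴` on a neighborhood of the box `[a1,b1] × [a2,b2] × [a3,b3]`. -/
def C4Near3 (u : ℝ → ℝ → ℝ → ℝ) (a1 b1 a2 b2 a3 b3 : ℝ) : Prop :=
  ∃ U : Set (ℝ × ℝ × ℝ), IsOpen U ∧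
    Set.Icc a1 b1 ×ˢ (Set.Icc a2 b2 ×ˢ Set.Icc a3 b3) ⊆ U ∧
    ContDiffOn ℝ 4 (fun p : ℝ × ℝ × ℝ => u p.1 p.2.1 p.2.2) U

def unc3 (f : ℝ → ℝ → ℝ → ℝ) : ℝ × ℝ × ℝ → ℝ := fun p => f p.1 p.2.1 p.2.2

section reg
variable {U : Set (ℝ × ℝ × ℝ)} {f : ℝ → ℝ → ℝ → ℝ}

lemma fd_at (hU : IsOpen U) {n : ℕ} (hf : ContDiffOn ℝ ((n + 1 : ℕ)) (unc3 f) U) {p : ℝ × ℝ × ℝ} (hp : p ∈ U) :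
    HasFDerivAt (unc3 f) (fderiv ℝ (unc3 f) p) p :=
  ((hf.differentiableOn (by simp)).differentiableAt (hU.mem_nhds hp)).hasFDerivAt

lemma hd1 (hU : IsOpen U) {n : ℕ} (hf : ContDiffOn ℝ ((n + 1 : ℕ)) (unc3 f) U) {x y z : ℝ} (hp : (x, y, z) ∈ U) :
    HasDerivAt (fun t => f t y z) (fderiv ℝ (unc3 f) (x, y, z) (1, 0, 0)) x := by
  have h1 : HasDerivAt (fun t : ℝ => (t, y, z)) ((1 : ℝ), (0 : ℝ), (0 : ℝ)) x :=
    (hasDerivAt_id x).prodMk ((hasDerivAt_const x y).prodMk (hasDerivAt_const x z))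
  exact (fd_at hU hf hp).comp_hasDerivAt x h1

lemma hd2 (hU : IsOpen U) {n : ℕ} (hf : ContDiffOn ℝ ((n + 1 : ℕ)) (unc3 f) U) {x y z : ℝ} (hp : (x, y, z) ∈ U) :
    HasDerivAt (fun t => f x t z) (fderiv ℝ (unc3 f) (x, y, z) (0, 1, 0)) y := by
  have h1 : HasDerivAt (fun t : ℝ => (x, t, z)) ((0 : ℝ), (1 : ℝ), (0 : ℝ)) y :=
    (hasDerivAt_const y x).prodMk ((hasDerivAt_id y).prodMk (hasDerivAt_const y z))
  exact (fd_at hU hf hp).comp_hasDerivAt y h1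

lemma hd3 (hU : IsOpen U) {n : ℕ} (hf : ContDiffOn ℝ ((n + 1 : ℕ)) (unc3 f) U) {x y z : ℝ} (hp : (x, y, z) ∈ U) :
    HasDerivAt (fun t => f x y t) (fderiv ℝ (unc3 f) (x, y, z) (0, 0, 1)) z := by
  have h1 : HasDerivAt (fun t : ℝ => (x, y, t)) ((0 : ℝ), (0 : ℝ), (1 : ℝ)) z :=
    (hasDerivAt_const z x).prodMk ((hasDerivAt_const z y).prodMk (hasDerivAt_id z))
  exact (fd_at hU hf hp).comp_hasDerivAt z h1

lemma cd_dir (hU : IsOpen U) {n : ℕ} (hf : ContDiffOn ℝ ((n + 1 : ℕ)) (unc3 f) U) (e : ℝ × ℝ × ℝ) :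
    ContDiffOn ℝ (n : ℕ) (fun p => fderiv ℝ (unc3 f) p e) U :=
  (hf.fderiv_of_isOpen hU (by norm_cast)).clm_apply contDiffOn_const

lemma cd1 (hU : IsOpen U) {n : ℕ} (hf : ContDiffOn ℝ ((n + 1 : ℕ)) (unc3 f) U) :
    ContDiffOn ℝ (n : ℕ) (unc3 (qd1 f)) U :=
  (cd_dir hU hf (1, 0, 0)).congr fun _ hp => (hd1 hU hf hp).deriv

lemma cd2 (hU : IsOpen U) {n : ℕ} (hf : ContDiffOn ℝ ((n + 1 : ℕ)) (unc3 f) U) :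
    ContDiffOn ℝ (n : ℕ) (unc3 (qd2 f)) U :=
  (cd_dir hU hf (0, 1, 0)).congr fun _ hp => (hd2 hU hf hp).deriv

lemma cd3 (hU : IsOpen U) {n : ℕ} (hf : ContDiffOn ℝ ((n + 1 : ℕ)) (unc3 f) U) :
    ContDiffOn ℝ (n : ℕ) (unc3 (qd3 f)) U :=
  (cd_dir hU hf (0, 0, 1)).congr fun _ hp => (hd3 hU hf hp).deriv

/-- congruence of derivatives on an open set -/
lemma qd2_congr (hU : IsOpen U) {g : ℝ → ℝ → ℝ → ℝ}
    (hfg : ∀ x y z, (x, y, z) ∈ U → f x y z = g x y z) :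
    ∀ x y z, (x, y, z) ∈ U → qd2 f x y z = qd2 g x y z := by
  intro x y z hp
  have hc : Continuous fun t : ℝ => (x, t, z) := by fun_prop
  have : ∀ᶠ t in nhds y, (x, t, z) ∈ U := hc.continuousAt.eventually (hU.mem_nhds hp)
  exact Filter.EventuallyEq.deriv_eq (this.mono fun t ht => hfg x t z ht)

lemma swap23 (hU : IsOpen U) {n : ℕ} (hf : ContDiffOn ℝ ((n + 2 : ℕ)) (unc3 f) U) :
    ∀ x y z, (x, y, z) ∈ U → qd3 (qd2 f) x y z = qd2 (qd3 f) x y z := by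
  intro x y z hp
  have hf' : ContDiffOn ℝ (((n + 1) + 1 : ℕ)) (unc3 f) U := hf
  have hs : IsSymmSndFDerivAt ℝ (unc3 f) (x, y, z) :=
    (hf.contDiffAt (hU.mem_nhds hp)).isSymmSndFDerivAt (by simp)
  have hd : ∀ e : ℝ × ℝ × ℝ, fderiv ℝ (fun p => fderiv ℝ (unc3 f) p e) (x, y, z)
      = (fderiv ℝ (fderiv ℝ (unc3 f)) (x, y, z)).flip e := by
    intro e
    have hdd : DifferentiableAt ℝ (fderiv ℝ (unc3 f)) (x, y, z) :=
      ((hf'.fderiv_of_isOpen (m := ((n + 1 : ℕ))) hU (by norm_cast)).differentiableOn (by simp)).differentiableAt (hU.mem_nhds hp)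
    ext <;> simp [fderiv_clm_apply hdd (differentiableAt_const e)]
  have e2 : unc3 (qd2 f) =ᶠ[nhds (x, y, z)] fun p => fderiv ℝ (unc3 f) p (0, 1, 0) :=
    (hU.eventually_mem hp).mono fun p hp => (hd2 hU hf' hp).deriv
  have e3 : unc3 (qd3 f) =ᶠ[nhds (x, y, z)] fun p => fderiv ℝ (unc3 f) p (0, 0, 1) :=
    (hU.eventually_mem hp).mono fun p hp => (hd3 hU hf' hp).deriv
  have a := (hd3 hU (cd2 hU hf') hp).deriv
  have b := (hd2 hU (cd3 hU hf') hp).deriv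
  rw [e2.fderiv_eq, hd] at a
  rw [e3.fderiv_eq, hd] at b
  change deriv _ _ = deriv _ _
  rw [a, b]
  exact hs _ _

lemma swap2223 (hU : IsOpen U) (hf : ContDiffOn ℝ ((4 : ℕ)) (unc3 f) U) :
    ∀ x y z, (x, y, z) ∈ U → qd3 (qd2 (qd2 (qd2 f))) x y z = qd2 (qd2 (qd2 (qd3 f))) x y z := by
  intro x y z hp
  have h1 := cd2 hU (n := 3) hf
  have h2 := cd2 hU (n := 2) h1
  rw [swap23 hU (n := 0) h2 x y z hp]
  refine qd2_congr hU ?_ x y z hp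
  intro x y z hp
  rw [swap23 hU (n := 1) h1 x y z hp]
  refine qd2_congr hU ?_ x y z hp
  exact swap23 hU (n := 2) hf

end reg

/-- iterated integral over the cube -/
noncomputable def I3 (h c1 c2 c3 : ℝ) (f : ℝ → ℝ → ℝ → ℝ) : ℝ :=
  ∫ x in (c1 - h)..(c1 + h), ∫ y in (c2 - h)..(c2 + h), ∫ z in (c3 - h)..(c3 + h), f x y z

section ints
variable {h c1 c2 c3 : ℝ} {f g : ℝ → ℝ → ℝ → ℝ}

lemma ct_z (hf : Continuous (unc3 f)) (x y : ℝ) : Continuous (fun z => f x y z) :=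
  hf.comp (by fun_prop : Continuous fun z : ℝ => (x, y, z))

lemma ct_yz (hf : Continuous (unc3 f)) (a b : ℝ) (x : ℝ) :
    Continuous (fun y => ∫ z in a..b, f x y z) := by
  apply intervalIntegral.continuous_parametric_intervalIntegral_of_continuous'
  exact hf.comp (by fun_prop : Continuous fun p : ℝ × ℝ => (x, p.1, p.2))

lemma ct_xyz (hf : Continuous (unc3 f)) (a b a' b' : ℝ) :
    Continuous (fun x => ∫ y in a'..b', ∫ z in a..b, f x y z) := by
  apply intervalIntegral.continuous_parametric_intervalIntegral_of_continuous'
  apply intervalIntegral.continuous_parametric_intervalIntegral_of_continuous'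
    (f := fun (p : ℝ × ℝ) z => f p.1 p.2 z)
  exact hf.comp (by fun_prop : Continuous fun p : (ℝ × ℝ) × ℝ => (p.1.1, p.1.2, p.2))

lemma swap2 {F : ℝ → ℝ → ℝ} (hF : Continuous F.uncurry) (a b c d : ℝ) :
    ∫ x in a..b, ∫ y in c..d, F x y = ∫ y in c..d, ∫ x in a..b, F x y := by
  apply intervalIntegral_intervalIntegral_swap
  have : IntegrableOn F.uncurry (Set.uIcc a b ×ˢ Set.uIcc c d) :=
    hF.continuousOn.integrableOn_compact (isCompact_uIcc.prod isCompact_uIcc)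
  exact this.mono_set (Set.prod_mono Set.uIoc_subset_uIcc Set.uIoc_subset_uIcc)

lemma I3_xzy (hf : Continuous (unc3 f)) :
    I3 h c1 c2 c3 f = ∫ x in (c1 - h)..(c1 + h), ∫ z in (c3 - h)..(c3 + h), ∫ y in (c2 - h)..(c2 + h), f x y z := by
  unfold I3
  congr 1; ext x
  apply swap2
  exact hf.comp (by fun_prop : Continuous fun p : ℝ × ℝ => (x, p.1, p.2))

lemma I3_zyx (hf : Continuous (unc3 f)) :
    I3 h c1 c2 c3 f = ∫ z in (c3 - h)..(c3 + h), ∫ y in (c2 - h)..(c2 + h), ∫ x in (c1 - h)..(c1 + h), f x y z := by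
  rw [I3_xzy hf, swap2]
  · congr 1; ext z
    apply swap2
    exact hf.comp (by fun_prop : Continuous fun p : ℝ × ℝ => (p.1, p.2, z))
  · apply intervalIntegral.continuous_parametric_intervalIntegral_of_continuous'
      (f := fun (p : ℝ × ℝ) y => f p.1 y p.2)
    exact hf.comp (by fun_prop : Continuous fun p : (ℝ × ℝ) × ℝ => (p.1.1, p.2, p.1.2))

lemma int_congr {c : ℝ} (hh : 0 < h) {φ ψ : ℝ → ℝ} (H : ∀ t ∈ Set.Icc (c - h) (c + h), φ t = ψ t) :
    ∫ t in (c - h)..(c + h), φ t = ∫ t in (c - h)..(c + h), ψ t := by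
  apply intervalIntegral.integral_congr
  rw [Set.uIcc_of_le (by linarith)]
  exact H

lemma I3_congr (hh : 0 < h) (H : ∀ x ∈ Set.Icc (c1 - h) (c1 + h), ∀ y ∈ Set.Icc (c2 - h) (c2 + h),
    ∀ z ∈ Set.Icc (c3 - h) (c3 + h), f x y z = g x y z) : I3 h c1 c2 c3 f = I3 h c1 c2 c3 g :=
  int_congr hh fun x hx => int_congr hh fun y hy => int_congr hh fun z hz => H x hx y hy z hz

lemma I3_mono (hh : 0 < h) (hf : Continuous (unc3 f)) (hg : Continuous (unc3 g))
    (H : ∀ x ∈ Set.Icc (c1 - h) (c1 + h), ∀ y ∈ Set.Icc (c2 - h) (c2 + h),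
    ∀ z ∈ Set.Icc (c3 - h) (c3 + h), f x y z ≤ g x y z) : I3 h c1 c2 c3 f ≤ I3 h c1 c2 c3 g := by
  apply intervalIntegral.integral_mono_on (by linarith) ((ct_xyz hf _ _ _ _).intervalIntegrable _ _)
    ((ct_xyz hg _ _ _ _).intervalIntegrable _ _)
  intro x hx
  apply intervalIntegral.integral_mono_on (by linarith) ((ct_yz hf _ _ _).intervalIntegrable _ _)
    ((ct_yz hg _ _ _).intervalIntegrable _ _)
  intro y hy
  apply intervalIntegral.integral_mono_on (by linarith) ((ct_z hf _ _).intervalIntegrable _ _)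
    ((ct_z hg _ _).intervalIntegrable _ _)
  intro z hz
  exact H x hx y hy z hz

lemma I3_nonneg (hh : 0 < h) (H : ∀ x y z, 0 ≤ f x y z) : 0 ≤ I3 h c1 c2 c3 f := by
  apply intervalIntegral.integral_nonneg (by linarith)
  intro x hx
  apply intervalIntegral.integral_nonneg (by linarith)
  intro y hy
  apply intervalIntegral.integral_nonneg (by linarith)
  intro z hz
  exact H x y z

lemma I3_add (hf : Continuous (unc3 f)) (hg : Continuous (unc3 g)) :
    I3 h c1 c2 c3 (fun x y z => f x y z + g x y z) = I3 h c1 c2 c3 f + I3 h c1 c2 c3 g := by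
  unfold I3
  rw [← intervalIntegral.integral_add ((ct_xyz hf _ _ _ _).intervalIntegrable _ _)
    ((ct_xyz hg _ _ _ _).intervalIntegrable _ _)]
  congr 1; ext x
  rw [← intervalIntegral.integral_add ((ct_yz hf _ _ _).intervalIntegrable _ _)
    ((ct_yz hg _ _ _).intervalIntegrable _ _)]
  congr 1; ext y
  rw [← intervalIntegral.integral_add ((ct_z hf _ _).intervalIntegrable _ _)
    ((ct_z hg _ _).intervalIntegrable _ _)]

lemma I3_smul (k : ℝ) :
    I3 h c1 c2 c3 (fun x y z => k * f x y z) = k * I3 h c1 c2 c3 f := by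
  unfold I3
  simp only [intervalIntegral.integral_const_mul]

lemma I3_cs (hh : 0 < h) (hf : Continuous (unc3 f)) (hg : Continuous (unc3 g)) :
    |I3 h c1 c2 c3 (fun x y z => f x y z * g x y z)| ≤
      Real.sqrt (I3 h c1 c2 c3 (fun x y z => f x y z ^ 2)) *
      Real.sqrt (I3 h c1 c2 c3 (fun x y z => g x y z ^ 2)) := by
  have hff : Continuous (unc3 fun x y z => f x y z ^ 2) := hf.pow 2
  have hgg : Continuous (unc3 fun x y z => g x y z ^ 2) := hg.pow 2
  have hfg : Continuous (unc3 fun x y z => f x y z * g x y z) := hf.mul hg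
  have key : ∀ t : ℝ, 0 ≤ I3 h c1 c2 c3 (fun x y z => f x y z ^ 2) * (t * t)
      + 2 * I3 h c1 c2 c3 (fun x y z => f x y z * g x y z) * t
      + I3 h c1 c2 c3 (fun x y z => g x y z ^ 2) := by
    intro t
    have h1 : Continuous (unc3 fun x y z => (t * t) * f x y z ^ 2) := continuous_const.mul hff
    have h2 : Continuous (unc3 fun x y z => (2 * t) * (f x y z * g x y z)) := continuous_const.mul hfg
    have h12 : Continuous (unc3 fun x y z => (t * t) * f x y z ^ 2 + (2 * t) * (f x y z * g x y z)) :=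
      h1.add h2
    have := I3_nonneg (h := h) (c1 := c1) (c2 := c2) (c3 := c3)
      (f := fun x y z => ((t * t) * f x y z ^ 2 + (2 * t) * (f x y z * g x y z)) + g x y z ^ 2) hh
      (fun x y z => by nlinarith [sq_nonneg (t * f x y z + g x y z)])
    rw [I3_add h12 hgg, I3_add h1 h2, I3_smul, I3_smul] at this
    linarith
  have := discrim_le_zero key
  rw [discrim] at this
  rw [← Real.sqrt_mul (I3_nonneg hh fun x y z => sq_nonneg _)]
  apply Real.abs_le_sqrt
  linarith

/-- clamping to an interval -/
noncomputable def clampc (h c t : ℝ) : ℝ := max (c - h) (min (c + h) t)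

noncomputable def ext3 (h c1 c2 c3 : ℝ) (f : ℝ → ℝ → ℝ → ℝ) : ℝ → ℝ → ℝ → ℝ :=
  fun x y z => f (clampc h c1 x) (clampc h c2 y) (clampc h c3 z)

lemma clamp_mem (hh : 0 < h) (c t : ℝ) : clampc h c t ∈ Set.Icc (c - h) (c + h) :=
  ⟨le_max_left _ _, max_le (by linarith) (min_le_left _ _)⟩

lemma clamp_eq {c t : ℝ} (ht : t ∈ Set.Icc (c - h) (c + h)) : clampc h c t = t := by
  unfold clampc
  rw [min_eq_right ht.2, max_eq_right ht.1]

lemma ext3_cont (hh : 0 < h) (hf : ContinuousOn (unc3 f)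
    (Set.Icc (c1 - h) (c1 + h) ×ˢ (Set.Icc (c2 - h) (c2 + h) ×ˢ Set.Icc (c3 - h) (c3 + h)))) :
    Continuous (unc3 (ext3 h c1 c2 c3 f)) := by
  have : Continuous fun p : ℝ × ℝ × ℝ => (clampc h c1 p.1, clampc h c2 p.2.1, clampc h c3 p.2.2) := by
    unfold clampc
    fun_prop
  exact hf.comp_continuous this fun p => ⟨clamp_mem hh _ _, clamp_mem hh _ _, clamp_mem hh _ _⟩

lemma ext3_eq {x y z : ℝ} (hx : x ∈ Set.Icc (c1 - h) (c1 + h)) (hy : y ∈ Set.Icc (c2 - h) (c2 + h))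
    (hz : z ∈ Set.Icc (c3 - h) (c3 + h)) : ext3 h c1 c2 c3 f x y z = f x y z := by
  unfold ext3
  rw [clamp_eq hx, clamp_eq hy, clamp_eq hz]

/-- weighted Cauchy-Schwarz -/
lemma I3_bound (hh : 0 < h) {P k m : ℝ → ℝ → ℝ → ℝ} (hP : Continuous (unc3 P)) (hk : Continuous (unc3 k))
    (hm : Continuous (unc3 m))
    (H : ∀ x ∈ Set.Icc (c1 - h) (c1 + h), ∀ y ∈ Set.Icc (c2 - h) (c2 + h),
    ∀ z ∈ Set.Icc (c3 - h) (c3 + h), |k x y z| ≤ h ^ 2 / 2) :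
    |I3 h c1 c2 c3 (fun x y z => P x y z * k x y z * m x y z)| ≤
      h ^ 2 / 2 * Real.sqrt (I3 h c1 c2 c3 (fun x y z => P x y z ^ 2)) *
      Real.sqrt (I3 h c1 c2 c3 (fun x y z => m x y z ^ 2)) := by
  have hPk : Continuous (unc3 fun x y z => P x y z * k x y z) := hP.mul hk
  refine (I3_cs hh hPk hm).trans ?_
  gcongr
  have h1 : Continuous (unc3 fun x y z => (P x y z * k x y z) ^ 2) := hPk.pow 2
  have h2 : Continuous (unc3 fun x y z => (h ^ 2 / 2) ^ 2 * P x y z ^ 2) :=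
    continuous_const.mul (hP.pow 2)
  have := I3_mono (c1 := c1) (c2 := c2) (c3 := c3)
    (f := fun x y z => (P x y z * k x y z) ^ 2) hh h1 h2
    (fun x hx y hy z hz => by
      rw [mul_pow, mul_comm]
      gcongr ?_ * _
      exact sq_le_sq' (by linarith [neg_abs_le (k x y z), H x hx y hy z hz])
        ((le_abs_self _).trans (H x hx y hy z hz)))
  rw [I3_smul] at this
  refine (Real.sqrt_le_sqrt this).trans ?_
  rw [Real.sqrt_mul (by positivity), Real.sqrt_sq (by positivity)]

lemma parts {c : ℝ} (hh : 0 < h) {φ φ' : ℝ → ℝ}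
    (hd : ∀ t ∈ Set.Icc (c - h) (c + h), HasDerivAt φ (φ' t) t)
    (hc : ContinuousOn φ' (Set.Icc (c - h) (c + h))) :
    ∫ t in (c - h)..(c + h), φ t * (t - c) =
      ∫ t in (c - h)..(c + h), φ' t * ((h ^ 2 - (t - c) ^ 2) / 2) := by
  have hu : Set.uIcc (c - h) (c + h) = Set.Icc (c - h) (c + h) := Set.uIcc_of_le (by linarith)
  have := intervalIntegral.integral_mul_deriv_eq_deriv_mul (a := c - h) (b := c + h) (u := φ) (u' := φ')
    (v := fun t => ((t - c) ^ 2 - h ^ 2) / 2) (v' := fun t => t - c) (by rw [hu]; exact hd)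
    (by
      intro t _
      have := ((((hasDerivAt_id t).sub_const c).pow 2).sub_const (h ^ 2)).div_const 2
      exact this.congr_deriv (by simp))
    (ContinuousOn.intervalIntegrable (by rw [hu]; exact hc))
    (Continuous.intervalIntegrable (by fun_prop) _ _)
  rw [this, ← sub_eq_zero]
  have e : ∫ t in (c - h)..(c + h), φ' t * ((h ^ 2 - (t - c) ^ 2) / 2) =
     - ∫ t in (c - h)..(c + h), φ' t * (((t - c) ^ 2 - h ^ 2) / 2) := by
    rw [← intervalIntegral.integral_neg]
    congr 1; ext t; ring
  rw [e]
  ring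

lemma lin_int (A B c : ℝ) : ∫ t in (c - h)..(c + h), (A + B * t) = 2 * h * (A + B * c) := by
  rw [intervalIntegral.integral_add (by simp) (Continuous.intervalIntegrable (by fun_prop) _ _)]
  rw [intervalIntegral.integral_const_mul, integral_id, intervalIntegral.integral_const]
  simp only [smul_eq_mul]
  ring

lemma I3_mono_on (hh : 0 < h) {B : Set (ℝ × ℝ × ℝ)}
    (hB : Set.Icc (c1 - h) (c1 + h) ×ˢ (Set.Icc (c2 - h) (c2 + h) ×ˢ Set.Icc (c3 - h) (c3 + h)) ⊆ B)
    (hf : ContinuousOn (unc3 f) B) (hg : ContinuousOn (unc3 g) B)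
    (H : ∀ x y z, f x y z ≤ g x y z) : I3 h c1 c2 c3 f ≤ I3 h c1 c2 c3 g := by
  have e1 : I3 h c1 c2 c3 f = I3 h c1 c2 c3 (ext3 h c1 c2 c3 f) :=
    I3_congr hh fun x hx y hy z hz => (ext3_eq hx hy hz).symm
  have e2 : I3 h c1 c2 c3 g = I3 h c1 c2 c3 (ext3 h c1 c2 c3 g) :=
    I3_congr hh fun x hx y hy z hz => (ext3_eq hx hy hz).symm
  rw [e1, e2]
  exact I3_mono hh (ext3_cont hh (hf.mono hB)) (ext3_cont hh (hg.mono hB))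
    fun x _ y _ z _ => H _ _ _

end ints

section semis
variable {h c1 c2 c3 : ℝ} {U : Set (ℝ × ℝ × ℝ)}

lemma semiH4_lb {u : ℝ → ℝ → ℝ → ℝ} (hh : 0 < h) (hU : IsOpen U)
    (hB : Set.Icc (c1 - h) (c1 + h) ×ˢ (Set.Icc (c2 - h) (c2 + h) ×ˢ Set.Icc (c3 - h) (c3 + h)) ⊆ U)
    (hu : ContDiffOn ℝ ((4 : ℕ)) (unc3 u) U) :
    Real.sqrt (I3 h c1 c2 c3 fun x y z => (qd1 (qd2 (qd2 (qd2 u))) x y z) ^ 2) ≤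
      semiH4Box u (c1 - h) (c1 + h) (c2 - h) (c2 + h) (c3 - h) (c3 + h) ∧
    Real.sqrt (I3 h c1 c2 c3 fun x y z => (qd2 (qd2 (qd2 (qd3 u))) x y z) ^ 2) ≤
      semiH4Box u (c1 - h) (c1 + h) (c2 - h) (c2 + h) (c3 - h) (c3 + h) := by
  have t1 := (cd1 hU (cd1 hU (cd1 hU (cd1 hU hu)))).continuousOn
  have t2 := (cd2 hU (cd2 hU (cd2 hU (cd2 hU hu)))).continuousOn
  have t3 := (cd3 hU (cd3 hU (cd3 hU (cd3 hU hu)))).continuousOn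
  have t4 := (cd1 hU (cd1 hU (cd1 hU (cd2 hU hu)))).continuousOn
  have t5 := (cd1 hU (cd1 hU (cd1 hU (cd3 hU hu)))).continuousOn
  have t6 := (cd1 hU (cd2 hU (cd2 hU (cd2 hU hu)))).continuousOn
  have t7 := (cd2 hU (cd2 hU (cd2 hU (cd3 hU hu)))).continuousOn
  have t8 := (cd1 hU (cd3 hU (cd3 hU (cd3 hU hu)))).continuousOn
  have t9 := (cd2 hU (cd3 hU (cd3 hU (cd3 hU hu)))).continuousOn
  have t10 := (cd1 hU (cd1 hU (cd2 hU (cd2 hU hu)))).continuousOn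
  have t11 := (cd1 hU (cd1 hU (cd3 hU (cd3 hU hu)))).continuousOn
  have t12 := (cd2 hU (cd2 hU (cd3 hU (cd3 hU hu)))).continuousOn
  have t13 := (cd1 hU (cd1 hU (cd2 hU (cd3 hU hu)))).continuousOn
  have t14 := (cd1 hU (cd2 hU (cd2 hU (cd3 hU hu)))).continuousOn
  have t15 := (cd1 hU (cd2 hU (cd3 hU (cd3 hU hu)))).continuousOn
  constructor
  · apply Real.sqrt_le_sqrt
    apply I3_mono_on hh hB
    · exact t6.pow 2
    · unfold unc3 at *
      fun_prop
    · intro x y z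
      have := sq_nonneg (qd1 (qd2 (qd2 (qd2 u))) x y z)
      rw [← sub_nonneg]
      ring_nf
      positivity
  · apply Real.sqrt_le_sqrt
    apply I3_mono_on hh hB
    · exact t7.pow 2
    · unfold unc3 at *
      fun_prop
    · intro x y z
      rw [← sub_nonneg]
      ring_nf
      positivity

lemma semiH2_lb {w : ℝ → ℝ → ℝ → ℝ} (hh : 0 < h) 
    (hw : ContDiffOn ℝ ((2 : ℕ)) (unc3 w) Set.univ) :
    Real.sqrt (I3 h c1 c2 c3 fun x y z => (qd1 (qd2 w) x y z) ^ 2) ≤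
      semiH2Box w (c1 - h) (c1 + h) (c2 - h) (c2 + h) (c3 - h) (c3 + h) ∧
    Real.sqrt (I3 h c1 c2 c3 fun x y z => (qd2 (qd3 w) x y z) ^ 2) ≤
      semiH2Box w (c1 - h) (c1 + h) (c2 - h) (c2 + h) (c3 - h) (c3 + h) := by
  have hU : IsOpen (Set.univ : Set (ℝ × ℝ × ℝ)) := isOpen_univ
  have t1 := (cd1 hU (cd1 hU hw)).continuousOn
  have t2 := (cd2 hU (cd2 hU hw)).continuousOn
  have t3 := (cd3 hU (cd3 hU hw)).continuousOn
  have t4 := (cd1 hU (cd2 hU hw)).continuousOn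
  have t5 := (cd1 hU (cd3 hU hw)).continuousOn
  have t6 := (cd2 hU (cd3 hU hw)).continuousOn
  constructor
  · apply Real.sqrt_le_sqrt
    apply I3_mono_on hh (Set.subset_univ _)
    · exact t4.pow 2
    · unfold unc3 at *
      fun_prop
    · intro x y z
      rw [← sub_nonneg]
      ring_nf
      positivity
  · apply Real.sqrt_le_sqrt
    apply I3_mono_on hh (Set.subset_univ _)
    · exact t6.pow 2
    · unfold unc3 at *
      fun_prop
    · intro x y z
      rw [← sub_nonneg]
      ring_nf
      positivity

end semis

/-- The two volume terms obtained after integration by parts. -/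
lemma volume_terms {h c1 c2 c3 : ℝ} {U : Set (ℝ × ℝ × ℝ)} {v : ℝ → ℝ → ℝ → ℝ} (hh : 0 < h) (hU : IsOpen U)
    (hB : Set.Icc (c1 - h) (c1 + h) ×ˢ (Set.Icc (c2 - h) (c2 + h) ×ˢ Set.Icc (c3 - h) (c3 + h)) ⊆ U)
    (hv : ContDiffOn ℝ ((1 : ℕ)) (unc3 v) U) (α β γ : ℝ) :
    |I3 h c1 c2 c3 fun x y z => v x y z * ((x - c1) * (α + γ * (z - c3)) + β * (z - c3))| ≤
      h ^ 2 / 2 * Real.sqrt (I3 h c1 c2 c3 (fun x y z => qd1 v x y z ^ 2)) *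
        Real.sqrt (I3 h c1 c2 c3 (fun _ _ z => (α + γ * (z - c3)) ^ 2)) +
      h ^ 2 / 2 * Real.sqrt (I3 h c1 c2 c3 (fun x y z => qd3 v x y z ^ 2)) *
        Real.sqrt (I3 h c1 c2 c3 (fun _ _ _ => β ^ 2)) := by
  have mem : ∀ {x y z}, x ∈ Set.Icc (c1 - h) (c1 + h) → y ∈ Set.Icc (c2 - h) (c2 + h) →
      z ∈ Set.Icc (c3 - h) (c3 + h) → (x, y, z) ∈ U := fun hx hy hz => hB ⟨hx, hy, hz⟩
  have cP := (cd1 hU hv).continuousOn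
  have cQ := (cd3 hU hv).continuousOn
  have cV := ext3_cont hh (hv.continuousOn.mono hB)
  have cP' := ext3_cont hh (cP.mono hB)
  have cQ' := ext3_cont hh (cQ.mono hB)
  have ck1 : Continuous (unc3 fun x y z => (h ^ 2 - (x - c1) ^ 2) / 2) := by unfold unc3; fun_prop
  have ck3 : Continuous (unc3 fun x y z => (h ^ 2 - (z - c3) ^ 2) / 2) := by unfold unc3; fun_prop
  have cm : Continuous (unc3 fun _ _ z => α + γ * (z - c3)) := by unfold unc3; fun_prop
  have cb : Continuous (unc3 fun _ _ _ => β) := continuous_const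
  have cx : Continuous (unc3 fun x _ _ => x - c1) := by unfold unc3; fun_prop
  have cz : Continuous (unc3 fun _ _ z => z - c3) := by unfold unc3; fun_prop
  have cT1 : Continuous (unc3 fun x y z => ext3 h c1 c2 c3 v x y z * (x - c1) * (α + γ * (z - c3))) :=
    (cV.mul cx).mul cm
  have cT2 : Continuous (unc3 fun x y z => ext3 h c1 c2 c3 v x y z * (z - c3) * β) :=
    (cV.mul cz).mul cb
  have cR1 : Continuous (unc3 fun x y z => ext3 h c1 c2 c3 (qd1 v) x y z * ((h ^ 2 - (x - c1) ^ 2) / 2) * (α + γ * (z - c3))) :=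
    (cP'.mul ck1).mul cm
  have sq : ∀ {t c : ℝ}, t ∈ Set.Icc (c - h) (c + h) → |(h ^ 2 - (t - c) ^ 2) / 2| ≤ h ^ 2 / 2 := by
    intro t c ht
    have : (t - c) ^ 2 ≤ h ^ 2 := sq_le_sq' (by linarith [ht.1]) (by linarith [ht.2])
    rw [abs_of_nonneg (by linarith)]
    linarith [sq_nonneg (t - c)]
  -- splitting
  have split : (I3 h c1 c2 c3 fun x y z => v x y z * ((x - c1) * (α + γ * (z - c3)) + β * (z - c3))) =
      (I3 h c1 c2 c3 fun x y z => ext3 h c1 c2 c3 v x y z * (x - c1) * (α + γ * (z - c3))) +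
      I3 h c1 c2 c3 fun x y z => ext3 h c1 c2 c3 v x y z * (z - c3) * β := by
    rw [← I3_add cT1 cT2]
    refine I3_congr hh fun x hx y hy z hz => ?_
    rw [ext3_eq hx hy hz]; ring
  have A : (I3 h c1 c2 c3 fun x y z => ext3 h c1 c2 c3 v x y z * (x - c1) * (α + γ * (z - c3))) =
      I3 h c1 c2 c3 fun x y z => ext3 h c1 c2 c3 (qd1 v) x y z * ((h ^ 2 - (x - c1) ^ 2) / 2) * (α + γ * (z - c3)) := by
    rw [I3_zyx cT1, I3_zyx cR1]
    refine int_congr hh fun z hz => int_congr hh fun y hy => ?_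
    rw [intervalIntegral.integral_mul_const, intervalIntegral.integral_mul_const]
    congr 1
    rw [int_congr hh (φ := fun x => ext3 h c1 c2 c3 v x y z * (x - c1))
      (ψ := fun x => v x y z * (x - c1)) fun x hx => by rw [ext3_eq hx hy hz],
      int_congr hh (φ := fun x => ext3 h c1 c2 c3 (qd1 v) x y z * ((h ^ 2 - (x - c1) ^ 2) / 2))
      (ψ := fun x => qd1 v x y z * ((h ^ 2 - (x - c1) ^ 2) / 2)) fun x hx => by rw [ext3_eq hx hy hz]]
    apply parts hh
    · intro x hx
      exact (hd1 (n := 0) hU hv (mem hx hy hz)).differentiableAt.hasDerivAt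
    · exact cP.comp (f := fun x : ℝ => (x, y, z)) (by fun_prop) fun x hx => mem hx hy hz
  have B : (I3 h c1 c2 c3 fun x y z => ext3 h c1 c2 c3 v x y z * (z - c3) * β) =
      I3 h c1 c2 c3 fun x y z => ext3 h c1 c2 c3 (qd3 v) x y z * ((h ^ 2 - (z - c3) ^ 2) / 2) * β := by
    refine int_congr hh fun x hx => int_congr hh fun y hy => ?_
    rw [intervalIntegral.integral_mul_const, intervalIntegral.integral_mul_const]
    congr 1
    rw [int_congr hh (φ := fun z => ext3 h c1 c2 c3 v x y z * (z - c3))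
      (ψ := fun z => v x y z * (z - c3)) fun z hz => by rw [ext3_eq hx hy hz],
      int_congr hh (φ := fun z => ext3 h c1 c2 c3 (qd3 v) x y z * ((h ^ 2 - (z - c3) ^ 2) / 2))
      (ψ := fun z => qd3 v x y z * ((h ^ 2 - (z - c3) ^ 2) / 2)) fun z hz => by rw [ext3_eq hx hy hz]]
    apply parts hh
    · intro z hz
      exact (hd3 (n := 0) hU hv (mem hx hy hz)).differentiableAt.hasDerivAt
    · exact cQ.comp (f := fun z : ℝ => (x, y, z)) (by fun_prop) fun z hz => mem hx hy hz
  have eP : I3 h c1 c2 c3 (fun x y z => qd1 v x y z ^ 2) = I3 h c1 c2 c3 (fun x y z => ext3 h c1 c2 c3 (qd1 v) x y z ^ 2) :=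
    I3_congr hh fun x hx y hy z hz => by rw [ext3_eq hx hy hz]
  have eQ : I3 h c1 c2 c3 (fun x y z => qd3 v x y z ^ 2) = I3 h c1 c2 c3 (fun x y z => ext3 h c1 c2 c3 (qd3 v) x y z ^ 2) :=
    I3_congr hh fun x hx y hy z hz => by rw [ext3_eq hx hy hz]
  rw [split, A, B, eP, eQ]
  refine (abs_add_le _ _).trans (add_le_add ?_ ?_)
  · exact I3_bound hh cP' ck1 cm fun x hx y hy z hz => sq hx
  · exact I3_bound hh cQ' ck3 cb fun x hx y hy z hz => sq hz

/-- The difference of the face integrals is a volume integral. -/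
lemma face_diff {h c1 c2 c3 : ℝ} {U : Set (ℝ × ℝ × ℝ)} {g : ℝ → ℝ → ℝ → ℝ} (hh : 0 < h) (hU : IsOpen U)
    (hB : Set.Icc (c1 - h) (c1 + h) ×ˢ (Set.Icc (c2 - h) (c2 + h) ×ˢ Set.Icc (c3 - h) (c3 + h)) ⊆ U)
    (hg : ContDiffOn ℝ ((1 : ℕ)) (unc3 g) U) {R : ℝ → ℝ → ℝ} (hR : Continuous fun p : ℝ × ℝ => R p.1 p.2) :
    (∫ x in (c1 - h)..(c1 + h), ∫ z in (c3 - h)..(c3 + h), g x (c2 + h) z * R x z) -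
    (∫ x in (c1 - h)..(c1 + h), ∫ z in (c3 - h)..(c3 + h), g x (c2 - h) z * R x z) =
    I3 h c1 c2 c3 fun x y z => qd2 g x y z * R x z := by
  have mem : ∀ {x y z}, x ∈ Set.Icc (c1 - h) (c1 + h) → y ∈ Set.Icc (c2 - h) (c2 + h) →
      z ∈ Set.Icc (c3 - h) (c3 + h) → (x, y, z) ∈ U := fun hx hy hz => hB ⟨hx, hy, hz⟩
  have hp : c2 + h ∈ Set.Icc (c2 - h) (c2 + h) := ⟨by linarith, le_rfl⟩
  have hm : c2 - h ∈ Set.Icc (c2 - h) (c2 + h) := ⟨le_rfl, by linarith⟩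
  have cV := (cd2 (n := 0) hU hg).continuousOn
  have cG := ext3_cont hh (hg.continuousOn.mono hB)
  have cV' := ext3_cont hh (cV.mono hB)
  have cR : Continuous (unc3 fun x _ z => R x z) :=
    hR.comp (by fun_prop : Continuous fun p : ℝ × ℝ × ℝ => (p.1, p.2.2))
  have cVR : Continuous (unc3 fun x y z => ext3 h c1 c2 c3 (qd2 g) x y z * R x z) := cV'.mul cR
  have cGR : Continuous (unc3 fun x y z => ext3 h c1 c2 c3 g x y z * R x z) := cG.mul cR
  have cf : ∀ y, Continuous fun p : ℝ × ℝ => ext3 h c1 c2 c3 g p.1 y p.2 * R p.1 p.2 := fun y =>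
    cGR.comp (by fun_prop : Continuous fun p : ℝ × ℝ => (p.1, y, p.2))
  have e : ∀ y ∈ Set.Icc (c2 - h) (c2 + h),
      (∫ x in (c1 - h)..(c1 + h), ∫ z in (c3 - h)..(c3 + h), g x y z * R x z) =
      ∫ x in (c1 - h)..(c1 + h), ∫ z in (c3 - h)..(c3 + h), ext3 h c1 c2 c3 g x y z * R x z :=
    fun y hy => int_congr hh fun x hx => int_congr hh fun z hz => by rw [ext3_eq hx hy hz]
  rw [I3_congr hh (g := fun x y z => ext3 h c1 c2 c3 (qd2 g) x y z * R x z)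
    fun x hx y hy z hz => by rw [ext3_eq hx hy hz], I3_xzy cVR, e _ hp, e _ hm]
  have i1 : ∀ y, IntervalIntegrable (fun x => ∫ z in (c3 - h)..(c3 + h), ext3 h c1 c2 c3 g x y z * R x z)
      volume (c1 - h) (c1 + h) := fun y =>
    (intervalIntegral.continuous_parametric_intervalIntegral_of_continuous'
      (f := fun x z => ext3 h c1 c2 c3 g x y z * R x z) (cf y) _ _).intervalIntegrable _ _
  have i2 : ∀ x y, IntervalIntegrable (fun z => ext3 h c1 c2 c3 g x y z * R x z)
      volume (c3 - h) (c3 + h) := fun x y => (ct_z cGR x y).intervalIntegrable _ _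
  rw [← intervalIntegral.integral_sub (i1 _) (i1 _)]
  refine int_congr hh fun x hx => ?_
  rw [← intervalIntegral.integral_sub (i2 _ _) (i2 _ _)]
  refine int_congr hh fun z hz => ?_
  rw [intervalIntegral.integral_mul_const,
    int_congr hh (ψ := fun y => qd2 g x y z) fun y hy => ext3_eq hx hy hz,
    ext3_eq hx hp hz, ext3_eq hx hm hz, ← sub_mul]
  congr 1
  have hu : Set.uIcc (c2 - h) (c2 + h) = Set.Icc (c2 - h) (c2 + h) := Set.uIcc_of_le (by linarith)
  symm
  apply intervalIntegral.integral_eq_sub_of_hasDerivAt (f := fun y => g x y z)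
  · rw [hu]
    intro y hy
    exact (hd2 (n := 0) hU hg (mem hx hy hz)).differentiableAt.hasDerivAt
  · apply ContinuousOn.intervalIntegrable
    rw [hu]
    exact cV.comp (f := fun y : ℝ => (x, y, z)) (by fun_prop) fun y hy => mem hx hy hz

/-- Superconvergence of the normal-normal boundary term on the pair of opposite faces of
one cubic element normal to the `x₂`-axis. -/
theorem stmt_15 :
    ∃ C > (0:ℝ), ∀ h : ℝ, 0 < h → ∀ c1 c2 c3 : ℝ, ∀ u w : ℝ → ℝ → ℝ → ℝ,
      C4Near3 u (c1 - h) (c1 + h) (c2 - h) (c2 + h) (c3 - h) (c3 + h) → MorleyShape3 w →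
      |(∫ x in (c1 - h)..(c1 + h), ∫ z in (c3 - h)..(c3 + h),
            qd2 (qd2 u) x (c2 + h) z
              * (qd2 w x (c2 + h) z
                - (1 / (4 * h ^ 2)) * (∫ s in (c1 - h)..(c1 + h), ∫ t in (c3 - h)..(c3 + h), qd2 w s (c2 + h) t)))
          - (∫ x in (c1 - h)..(c1 + h), ∫ z in (c3 - h)..(c3 + h),
            qd2 (qd2 u) x (c2 - h) z
              * (qd2 w x (c2 - h) z
                - (1 / (4 * h ^ 2)) * (∫ s in (c1 - h)..(c1 + h), ∫ t in (c3 - h)..(c3 + h), qd2 w s (c2 - h) t)))|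
        ≤ C * h ^ 2 * semiH4Box u (c1 - h) (c1 + h) (c2 - h) (c2 + h) (c3 - h) (c3 + h) * semiH2Box w (c1 - h) (c1 + h) (c2 - h) (c2 + h) (c3 - h) (c3 + h) := by
  refine ⟨1, one_pos, ?_⟩
  intro h hh c1 c2 c3 u w hu hw
  obtain ⟨U, hU, hB, hu⟩ := hu
  obtain ⟨a0, a1, a2, a3, a4, a5, a6, a7, a8, a9, a10, a11, a12, a13, hw⟩ := hw
  have hu4 : ContDiffOn ℝ ((4 : ℕ)) (unc3 u) U := by exact_mod_cast hu
  have hw2 : ContDiffOn ℝ ((2 : ℕ)) (unc3 w) Set.univ := by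
    have : unc3 w = fun p : ℝ × ℝ × ℝ => a0 + a1 * p.1 + a2 * p.2.1 + a3 * p.2.2 + a4 * p.1 ^ 2
      + a5 * p.2.1 ^ 2 + a6 * p.2.2 ^ 2
      + a7 * (p.1 * p.2.1) + a8 * (p.1 * p.2.2) + a9 * (p.2.1 * p.2.2)
      + a10 * p.1 ^ 3 + a11 * p.2.1 ^ 3 + a12 * p.2.2 ^ 3 + a13 * (p.1 * p.2.1 * p.2.2) := by
      funext p; exact hw _ _ _
    rw [this, contDiffOn_univ]
    fun_prop
  have hcub : ∀ A B C D t : ℝ, deriv (fun s : ℝ => A + B * s + C * s ^ 2 + D * s ^ 3) t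
      = B + 2 * C * t + 3 * D * t ^ 2 := by
    intro A B C D t
    have := ((((hasDerivAt_id t).const_mul B).const_add A).add
      (((hasDerivAt_id t).pow 2).const_mul C)).add (((hasDerivAt_id t).pow 3).const_mul D)
    refine (HasDerivAt.deriv (this.congr_deriv ?_))
    simp
    ring
  have w2 : ∀ x y z, qd2 w x y z = a2 + a7 * x + a9 * z + a13 * (x * z) + 2 * a5 * y + 3 * a11 * y ^ 2 := by
    intro x y z
    have : (fun t => w x t z) = fun t => (a0 + a1 * x + a3 * z + a4 * x ^ 2 + a6 * z ^ 2 + a8 * (x * z)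
        + a10 * x ^ 3 + a12 * z ^ 3) + (a2 + a7 * x + a9 * z + a13 * (x * z)) * t + a5 * t ^ 2 + a11 * t ^ 3 := by
      funext t; rw [hw]; ring
    unfold qd2
    rw [this, hcub]
  have w3 : ∀ x y z, qd3 w x y z = a3 + a8 * x + a9 * y + a13 * (x * y) + 2 * a6 * z + 3 * a12 * z ^ 2 := by
    intro x y z
    have : (fun t => w x y t) = fun t => (a0 + a1 * x + a2 * y + a4 * x ^ 2 + a5 * y ^ 2 + a7 * (x * y)
        + a10 * x ^ 3 + a11 * y ^ 3) + (a3 + a8 * x + a9 * y + a13 * (x * y)) * t + a6 * t ^ 2 + a12 * t ^ 3 := by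
      funext t; rw [hw]; ring
    unfold qd3
    rw [this, hcub]
  have w12 : ∀ x y z, qd1 (qd2 w) x y z = (a7 + a13 * c3) + a13 * (z - c3) := by
    intro x y z
    have : (fun t => qd2 w t y z) = fun t => (a2 + a9 * z + 2 * a5 * y + 3 * a11 * y ^ 2)
        + (a7 + a13 * z) * t + 0 * t ^ 2 + 0 * t ^ 3 := by
      funext t; rw [w2]; ring
    unfold qd1
    rw [this, hcub]; ring
  have w23 : ∀ x y z, qd2 (qd3 w) x y z = a9 + a13 * x := by
    intro x y z
    have : (fun t => qd3 w x t z) = fun t => (a3 + a8 * x + 2 * a6 * z + 3 * a12 * z ^ 2)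
        + (a9 + a13 * x) * t + 0 * t ^ 2 + 0 * t ^ 3 := by
      funext t; rw [w3]; ring
    change deriv (fun t => qd3 w x t z) y = _
    rw [this, hcub]; ring
  have mean : ∀ y, (∫ s in (c1 - h)..(c1 + h), ∫ t in (c3 - h)..(c3 + h), qd2 w s y t)
      = 4 * h ^ 2 * qd2 w c1 y c3 := by
    intro y
    have e1 : ∀ s, (∫ t in (c3 - h)..(c3 + h), qd2 w s y t) =
        2 * h * (a2 + 2 * a5 * y + 3 * a11 * y ^ 2 + a9 * c3) + 2 * h * (a7 + a13 * c3) * s := by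
      intro s
      have : (fun t => qd2 w s y t) = fun t => (a2 + a7 * s + 2 * a5 * y + 3 * a11 * y ^ 2)
          + (a9 + a13 * s) * t := by
        funext t; rw [w2]; ring
      rw [this, lin_int]; ring
    simp only [e1]
    rw [lin_int, w2]; ring
  have res : ∀ x y z, qd2 w x y z - (1 / (4 * h ^ 2)) * (∫ s in (c1 - h)..(c1 + h), ∫ t in (c3 - h)..(c3 + h), qd2 w s y t)
      = (x - c1) * ((a7 + a13 * c3) + a13 * (z - c3)) + (a9 + a13 * c1) * (z - c3) := by
    intro x y z
    have hne : h ≠ 0 := hh.ne'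
    rw [mean, ← mul_assoc, one_div, inv_mul_cancel₀ (by positivity), one_mul, w2, w2]; ring
  simp only [res]
  have g1 := cd2 hU (cd2 hU hu4)
  rw [face_diff hh hU hB (g := qd2 (qd2 u)) (g1.of_le (by norm_num))
    (R := fun x z => (x - c1) * ((a7 + a13 * c3) + a13 * (z - c3)) + (a9 + a13 * c1) * (z - c3)) (by fun_prop)]
  refine (volume_terms hh hU hB (cd2 hU g1) _ _ _).trans ?_
  obtain ⟨s1, s2⟩ := semiH4_lb hh hU hB hu4
  obtain ⟨r1, r2⟩ := semiH2_lb (c1 := c1) (c2 := c2) (c3 := c3) hh hw2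
  have e3 : I3 h c1 c2 c3 (fun x y z => qd3 (qd2 (qd2 (qd2 u))) x y z ^ 2) =
      I3 h c1 c2 c3 (fun x y z => qd2 (qd2 (qd2 (qd3 u))) x y z ^ 2) :=
    I3_congr hh fun x hx y hy z hz => by rw [swap2223 hU hu4 x y z (hB ⟨hx, hy, hz⟩)]
  have e4 : I3 h c1 c2 c3 (fun _ _ _ => (a9 + a13 * c1) ^ 2) ≤
      I3 h c1 c2 c3 (fun x y z => qd2 (qd3 w) x y z ^ 2) := by
    simp only [w23]
    have : I3 h c1 c2 c3 (fun _ _ _ => (a9 + a13 * c1) ^ 2) =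
        I3 h c1 c2 c3 (fun x _ _ => (a9 + a13 * c1) ^ 2 + 2 * (a9 + a13 * c1) * a13 * (x - c1)) := by
      have k : ∀ x : ℝ, 2 * h * (2 * h * ((a9 + a13 * c1) ^ 2 + 2 * (a9 + a13 * c1) * a13 * (x - c1))) =
        4 * h ^ 2 * ((a9 + a13 * c1) ^ 2 - 2 * (a9 + a13 * c1) * a13 * c1) + 
          (4 * h ^ 2 * (2 * (a9 + a13 * c1) * a13)) * x := by intro x; ring
      have l : ∀ A c : ℝ, ∫ t in (c - h)..(c + h), A = 2 * h * A := by
        intro A c; rw [intervalIntegral.integral_const, smul_eq_mul]; ring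
      unfold I3
      simp only [l, k, lin_int]
      ring
    rw [this]
    apply I3_mono hh (by unfold unc3; fun_prop) (by unfold unc3; fun_prop)
    intro x _ y _ z _
    nlinarith [sq_nonneg (a13 * (x - c1))]
  simp only [w12] at r1
  rw [e3]
  have r3 := (Real.sqrt_le_sqrt e4).trans r2
  set S4 := semiH4Box u (c1 - h) (c1 + h) (c2 - h) (c2 + h) (c3 - h) (c3 + h)
  set S2 := semiH2Box w (c1 - h) (c1 + h) (c2 - h) (c2 + h) (c3 - h) (c3 + h)
  have p4 : 0 ≤ S4 := Real.sqrt_nonneg _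
  have p2 : 0 ≤ S2 := Real.sqrt_nonneg _
  calc _ ≤ h ^ 2 / 2 * S4 * S2 + h ^ 2 / 2 * S4 * S2 := by gcongr
    _ = _ := by ring
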